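/- A^3 = A as matrices over F_2 (equivalently, over the integers A^3 ≡ A entrywise modulo 2). -/

import Mathlib

/-!
The entry of `A ^ 3` at `(p, r)` is the parity of the number of paths `p, s, t, r` of internal
points in which consecutive points are orthogonal for the polarity.

If `p = r`, reversing the path, `(s, t) ↦ (t, s)`, has no fixed point because an internal point is
not orthogonal to itself; so the entry is `0`, which is also the entry of `A` (`sum_closed`).

If `p ≠ r`, let `c` be the pole of the line `pr`. It is not on the conic, since a tangent line
contains no internal point (`isSquare_of_tangent`). The orthogonal reflection in `c` is an
involution of the internal points preserving orthogonality and fixing `p` and `r`, and it fixes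
only `c` and the points of the line `pr` (`exists_reflection`). Hence it pairs off all paths
except those with `s` and `t` both fixed and those through `c`. If `s` and `t` both lie on the line
`pr`, then `s = r` and `t = p`, which is a path exactly when `p` and `r` are orthogonal
(`eq_of_collinear_path`, `sum_generic`); this contributes the entry of `A`.

Paths through `c` matter only if `c` is internal (`sum_special`). Those with `s = c` correspond to
internal points orthogonal to `c` and `r`, those with `t = c` to internal points orthogonal to `c`
and `p`. For orthogonal internal points `u, v` the point orthogonal to both has
`Q = -4 Q(u) Q(v)`, and `Q(u) Q(v)` is a square, so it is internal iff `-1` is a nonsquare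
(`exists_common_iff`). The two kinds of paths are therefore equally many and cancel.
-/

open scoped Classical

noncomputable section

namespace ConicPaper

variable (K : Type) [Field K] [Fintype K]

/-- Points (and also lines, via homogeneous coordinates) of `PG(2,q)`. -/
abbrev Pt := Projectivization K (Fin 3 → K)

instance : Fintype (Pt K) := @Fintype.ofFinite _ (Quotient.finite _)

/-- `a` is a nonsquare in `K`. -/
def Nonsq (a : K) : Prop := ¬ IsSquare a

/-- The quadratic form `Q(x0,x1,x2) = x1^2 - x0*x2` defining the conic. -/
def Qf (v : Fin 3 → K) : K := v 1 ^ 2 - v 0 * v 2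

/-- A point is internal when `Q` of (a representative of) it is a nonsquare. -/
def Internal (p : Pt K) : Prop := Nonsq K (Qf K p.rep)

/-- A point is external when `Q` of it is a nonzero square. -/
def External (p : Pt K) : Prop := Qf K p.rep ≠ 0 ∧ IsSquare (Qf K p.rep)

/-- The point `p` lies on the line `ℓ = [b0,b1,b2]`. -/
def OnL (p ℓ : Pt K) : Prop :=
  p.rep 0 * ℓ.rep 0 + p.rep 1 * ℓ.rep 1 + p.rep 2 * ℓ.rep 2 = 0

/-- Discriminant `b1^2 - 4 b0 b2` of a line. -/
def lineDisc (ℓ : Pt K) : K := ℓ.rep 1 ^ 2 - 4 * ℓ.rep 0 * ℓ.rep 2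

/-- A line is a passant when its discriminant is a nonsquare. -/
def Passant (ℓ : Pt K) : Prop := Nonsq K (lineDisc K ℓ)

/-- A line is a secant when its discriminant is a nonzero square. -/
def Secant (ℓ : Pt K) : Prop := lineDisc K ℓ ≠ 0 ∧ IsSquare (lineDisc K ℓ)

/-- The incidence pairing of the vector `w` with the polar line
`p^⊥ = [z, -2y, x]` of the point `p = (x,y,z)`. -/
def perpDot (p : Pt K) (w : Fin 3 → K) : K :=
  w 0 * p.rep 2 + w 1 * (-2 * p.rep 1) + w 2 * p.rep 0

/-- The point `r` lies on the passant line `p^⊥`. -/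
def OnPerp (p r : Pt K) : Prop := perpDot K p r.rep = 0

/-- The (finite) set `I` of internal points, as a type. -/
abbrev Ipts := {p : Pt K // Internal K p}

instance : Fintype (Ipts K) := Fintype.ofFinite _

/-- The incidence matrix `A` of passant lines versus internal points over `F_2`:
rows are indexed by internal points `p` (standing for the passant lines `p^⊥`),
columns by internal points `r`, with entry `1` iff `r` lies on `p^⊥`. -/
def Amat : Matrix (Ipts K) (Ipts K) (ZMod 2) :=
  Matrix.of fun p r => if OnPerp K p.1 r.1 then 1 else 0

/-! ### Vector identities -/

section Helpers

variable {F : Type} [Field F]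

/-- The polar form of `-Qf`; `perpDot F p w` is `Bf F p.rep w`. -/
def Bf (F : Type) [Field F] (v w : Fin 3 → F) : F := w 0 * v 2 + w 1 * (-2 * v 1) + w 2 * v 0

/-- The coordinates `[z, -2y, x]` of the polar line of `v = (x, y, z)`. -/
def dualVec (F : Type) [Field F] (v : Fin 3 → F) : Fin 3 → F := ![v 2, -2 * v 1, v 0]

/-- A vector representing the pole of the line joining `u` and `v`; in odd characteristic it is zero
only if `u` and `v` are proportional. -/
def poleVec (F : Type) [Field F] (u v : Fin 3 → F) : Fin 3 → F :=
  ![2 * (u 0 * v 1 - u 1 * v 0), u 0 * v 2 - u 2 * v 0, 2 * (u 1 * v 2 - u 2 * v 1)]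

/-- The orthogonal reflection in `c`, multiplied by `Bf F c c` to avoid a division. -/
def reflVec (F : Type) [Field F] (c x : Fin 3 → F) : Fin 3 → F :=
  Bf F c c • x - (2 * Bf F x c) • c

theorem Bf_comm (v w : Fin 3 → F) : Bf F v w = Bf F w v := by
  unfold Bf; ring

theorem Bf_self (v : Fin 3 → F) : Bf F v v = -2 * Qf F v := by
  unfold Bf Qf; ring

theorem Bf_eq_dot (v w : Fin 3 → F) : Bf F v w = w ⬝ᵥ dualVec F v := by
  simp [Bf, dualVec, dotProduct, Fin.sum_univ_three]

theorem poleVec_eq_cross (u v : Fin 3 → F) :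
    poleVec F u v = crossProduct (dualVec F u) (dualVec F v) := by
  rw [cross_apply]
  ext i
  fin_cases i <;> simp [poleVec, dualVec] <;> ring

theorem Bf_poleVec_left (u v : Fin 3 → F) : Bf F (poleVec F u v) u = 0 := by
  simp [Bf, poleVec]; ring

theorem Bf_poleVec_right (u v : Fin 3 → F) : Bf F (poleVec F u v) v = 0 := by
  simp [Bf, poleVec]; ring

/-- The value of the form at the pole is a Gram determinant. -/
theorem Qf_poleVec (u v : Fin 3 → F) :
    Qf F (poleVec F u v) = Bf F u v ^ 2 - 4 * Qf F u * Qf F v := by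
  simp [Qf, Bf, poleVec]; ring

theorem Bf_reflVec (c x y : Fin 3 → F) :
    Bf F (reflVec F c x) (reflVec F c y) = Bf F c c ^ 2 * Bf F x y := by
  simp [Bf, reflVec]; ring

theorem Qf_reflVec (c x : Fin 3 → F) :
    Qf F (reflVec F c x) = Bf F c c ^ 2 * Qf F x := by
  simp [Bf, Qf, reflVec]; ring

theorem reflVec_reflVec (c x : Fin 3 → F) :
    reflVec F c (reflVec F c x) = (Bf F c c ^ 2) • x := by
  ext i; simp [Bf, reflVec]; ring

theorem reflVec_smul (c x : Fin 3 → F) (a : F) :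
    reflVec F c (a • x) = a • reflVec F c x := by
  ext i; simp [Bf, reflVec]; ring

theorem Qf_smul (a : F) (v : Fin 3 → F) : Qf F (a • v) = a ^ 2 * Qf F v := by
  simp [Qf]; ring

theorem Bf_smul (a b : F) (v w : Fin 3 → F) : Bf F (a • v) (b • w) = a * b * Bf F v w := by
  simp [Bf]; ring

/-- The polar line of a point of the conic is a tangent, and `Qf` takes only square values
on a tangent. -/
theorem isSquare_of_tangent {c x : Fin 3 → F} (hc : c ≠ 0) (hQ : Qf F c = 0)
    (hB : Bf F c x = 0) : IsSquare (Qf F x) := by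
  unfold Qf at *
  unfold Bf at hB
  by_cases h0 : c 0 = 0
  · have h1 : c 1 = 0 := by simpa [h0] using hQ
    have h2 : c 2 ≠ 0 := fun h2 => hc (by ext i; fin_cases i <;> simp [h0, h1, h2])
    have hx : x 0 = 0 := by simpa [h0, h1, h2] using hB
    exact ⟨x 1, by rw [hx]; ring⟩
  · refine ⟨(c 0 * x 1 - c 1 * x 0) / c 0, ?_⟩
    field_simp
    linear_combination (-x 0 * c 0) * hB - x 0 ^ 2 * hQ

/-- Vectors orthogonal to two independent vectors are proportional. -/
theorem cross_eq_zero_of_Bf {x y u v : Fin 3 → F} (huv : poleVec F u v ≠ 0)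
    (hxu : Bf F u x = 0) (hxv : Bf F v x = 0) (hyu : Bf F u y = 0) (hyv : Bf F v y = 0) :
    crossProduct x y = 0 := by
  rw [Bf_eq_dot] at *
  rcases Configuration.ofField.crossProduct_eq_zero_of_dotProduct_eq_zero hxu hyu hxv hyv with h | h
  · exact h
  · exact absurd ((poleVec_eq_cross u v).trans h) huv

theorem poleVec_ne_zero {u v : Fin 3 → F} (h2 : (2 : F) ≠ 0) (h : crossProduct u v ≠ 0) :
    poleVec F u v ≠ 0 := by
  contrapose! h
  have e0 := congrFun h 0
  have e1 := congrFun h 1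
  have e2 := congrFun h 2
  simp [poleVec, h2] at e0 e1 e2
  rw [cross_apply]
  ext i
  fin_cases i <;> simp
  · exact e2
  · linear_combination -e1
  · exact e0

/-- Orthogonality to `w` only depends on the line spanned by a vector. -/
theorem Bf_eq_zero_of_cross {c x w : Fin 3 → F} (hc : c ≠ 0) (h : crossProduct c x = 0)
    (hB : Bf F w c = 0) : Bf F w x = 0 := by
  rw [cross_apply] at h
  have e0 := congrFun h 0
  have e1 := congrFun h 1
  have e2 := congrFun h 2
  simp at e0 e1 e2
  unfold Bf at *
  by_contra hx
  apply hc
  ext i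
  apply mul_left_cancel₀ hx
  simp only [Pi.zero_apply, mul_zero]
  fin_cases i <;> simp only [Fin.zero_eta, Fin.mk_one, Fin.reduceFinMk]
  · linear_combination x 0 * hB - 2 * w 1 * e2 - w 0 * e1
  · linear_combination x 1 * hB - w 2 * e2 + w 0 * e0
  · linear_combination x 2 * hB + w 2 * e1 + 2 * w 1 * e0

theorem cross_reflVec (c x : Fin 3 → F) :
    crossProduct (reflVec F c x) x = (-2 * Bf F x c) • crossProduct c x := by
  simp only [cross_apply, reflVec]
  ext i
  fin_cases i <;> simp <;> ring

/-! ### Points -/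

theorem cross_ne_zero {p r : Pt F} (h : p ≠ r) : crossProduct p.rep r.rep ≠ 0 := by
  rw [← p.mk_rep, ← r.mk_rep, Ne,
    Projectivization.mk_eq_mk_iff_crossProduct_eq_zero p.rep_nonzero r.rep_nonzero] at h
  exact h

theorem eq_of_cross {p r : Pt F} (h : crossProduct p.rep r.rep = 0) : p = r := by
  by_contra h'
  exact cross_ne_zero h' h

theorem internal_mk {v : Fin 3 → F} (hv : v ≠ 0) :
    Internal F (Projectivization.mk F v hv) ↔ ¬ IsSquare (Qf F v) := by
  obtain ⟨a, ha⟩ := Projectivization.exists_smul_eq_mk_rep F v hv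
  have ha0 : (a : F) ≠ 0 := a.ne_zero
  unfold Internal Nonsq
  rw [← ha, Units.smul_def, Qf_smul, not_iff_not]
  constructor
  · rintro ⟨b, hb⟩
    refine ⟨b / a, ?_⟩
    field_simp
    linear_combination hb
  · rintro ⟨b, hb⟩
    exact ⟨a * b, by rw [hb]; ring⟩

theorem onPerp_iff (p r : Pt F) : OnPerp F p r ↔ Bf F p.rep r.rep = 0 := Iff.rfl

theorem onPerp_comm (p r : Pt F) : OnPerp F p r ↔ OnPerp F r p := by
  rw [onPerp_iff, onPerp_iff, Bf_comm]

theorem onPerp_mk {u v : Fin 3 → F} (hu : u ≠ 0) (hv : v ≠ 0) :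
    OnPerp F (Projectivization.mk F u hu) (Projectivization.mk F v hv) ↔ Bf F u v = 0 := by
  obtain ⟨a, ha⟩ := Projectivization.exists_smul_eq_mk_rep F u hu
  obtain ⟨b, hb⟩ := Projectivization.exists_smul_eq_mk_rep F v hv
  rw [onPerp_iff, ← ha, ← hb, Units.smul_def, Units.smul_def, Bf_smul]
  simp

theorem onPerp_mk_right (p : Pt F) {v : Fin 3 → F} (hv : v ≠ 0) :
    OnPerp F p (Projectivization.mk F v hv) ↔ Bf F p.rep v = 0 := by
  conv_lhs => rw [← p.mk_rep]
  exact onPerp_mk _ _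

theorem Qf_ne_zero (p : Ipts F) : Qf F p.1.rep ≠ 0 := by
  intro h
  apply p.2
  rw [h]
  exact IsSquare.zero

theorem not_onPerp_self (h2 : (2 : F) ≠ 0) (p : Ipts F) : ¬ OnPerp F p.1 p.1 := by
  rw [onPerp_iff, Bf_self]
  simp [h2, Qf_ne_zero]

/-- The polar lines of two distinct points meet in only one point. -/
theorem eq_of_onPerp (h2 : (2 : F) ≠ 0) {u v x y : Ipts F} (huv : u ≠ v)
    (hxu : OnPerp F u.1 x.1) (hxv : OnPerp F v.1 x.1)
    (hyu : OnPerp F u.1 y.1) (hyv : OnPerp F v.1 y.1) : x = y :=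
  Subtype.ext <| eq_of_cross <| cross_eq_zero_of_Bf
    (poleVec_ne_zero h2 (cross_ne_zero fun h => huv (Subtype.ext h))) hxu hxv hyu hyv

theorem Qf_pole_ne_zero (h2 : (2 : F) ≠ 0) {p r : Ipts F} (hpr : p ≠ r) :
    Qf F (poleVec F p.1.rep r.1.rep) ≠ 0 := fun h =>
  p.2 (isSquare_of_tangent
    (poleVec_ne_zero h2 (cross_ne_zero fun h => hpr (Subtype.ext h))) h (Bf_poleVec_left _ _))

/-- The reflection in the pole `c` of the line `pr` gives an involution of the internal points
which preserves orthogonality and fixes `p` and `r`. Its fixed points are `c` (if internal) and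
the points of the line `pr`. -/
theorem exists_reflection (h2 : (2 : F) ≠ 0) {p r : Ipts F} (hpr : p ≠ r) :
    ∃ σ : Ipts F → Ipts F, (∀ x, σ (σ x) = x) ∧
      (∀ x y, OnPerp F (σ x).1 (σ y).1 ↔ OnPerp F x.1 y.1) ∧ σ p = p ∧ σ r = r ∧
      ∀ x, σ x = x → (OnPerp F p.1 x.1 ∧ OnPerp F r.1 x.1) ∨
        Bf F (poleVec F p.1.rep r.1.rep) x.1.rep = 0 := by
  have hQ := Qf_pole_ne_zero h2 hpr
  set c := poleVec F p.1.rep r.1.rep with hcdef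
  have hcp : Bf F c p.1.rep = 0 := Bf_poleVec_left _ _
  have hcr : Bf F c r.1.rep = 0 := Bf_poleVec_right _ _
  have hc0 : c ≠ 0 := by
    intro h; apply hQ; rw [h]; simp [Qf]
  have hcc : Bf F c c ≠ 0 := by
    rw [Bf_self]; simp [h2, hQ]
  have hns : ∀ x : Ipts F, ¬ IsSquare (Qf F (reflVec F c x.1.rep)) := by
    intro x
    rw [Qf_reflVec]
    rintro ⟨b, hb⟩
    refine x.2 ⟨b / Bf F c c, ?_⟩
    field_simp
    linear_combination hb
  have hne : ∀ x : Ipts F, reflVec F c x.1.rep ≠ 0 := by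
    intro x h
    apply hns x
    rw [h]
    simp [Qf]
  let σ : Ipts F → Ipts F := fun x =>
    ⟨Projectivization.mk F (reflVec F c x.1.rep) (hne x), (internal_mk _).2 (hns x)⟩
  have hfix : ∀ x : Ipts F, Bf F c x.1.rep = 0 → σ x = x := by
    intro x hx
    apply Subtype.ext
    conv_rhs => rw [← x.1.mk_rep]
    rw [Projectivization.mk_eq_mk_iff_crossProduct_eq_zero, cross_reflVec, Bf_comm, hx]
    simp
  refine ⟨σ, ?_, ?_, hfix p hcp, hfix r hcr, ?_⟩
  · intro x
    apply Subtype.ext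
    conv_rhs => rw [← x.1.mk_rep]
    obtain ⟨a, ha⟩ := Projectivization.exists_smul_eq_mk_rep F _ (hne x)
    rw [Projectivization.mk_eq_mk_iff']
    refine ⟨a * Bf F c c ^ 2, ?_⟩
    change _ = reflVec F c (Projectivization.mk F _ (hne x)).rep
    rw [← ha, Units.smul_def, reflVec_smul, reflVec_reflVec, smul_smul]
  · intro x y
    rw [onPerp_mk, Bf_reflVec, onPerp_iff]
    simp [hcc]
  · intro x hx
    have h := congrArg Subtype.val hx
    conv_rhs at h => rw [← x.1.mk_rep]
    rw [Projectivization.mk_eq_mk_iff_crossProduct_eq_zero, cross_reflVec, smul_eq_zero] at h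
    rcases h with h | h
    · right
      rw [Bf_comm]
      simpa [h2] using h
    · left
      exact ⟨Bf_eq_zero_of_cross hc0 h (by rw [Bf_comm]; exact hcp),
        Bf_eq_zero_of_cross hc0 h (by rw [Bf_comm]; exact hcr)⟩

/-- If `p, s, t, r` all lie on the line `pr` and are consecutively orthogonal, then `t = p` and
`s = r`, because a point of that line is orthogonal to exactly one point of it. -/
theorem eq_of_collinear_path (h2 : (2 : F) ≠ 0) {p r s t : Ipts F} (hpr : p ≠ r)
    (hps : OnPerp F p.1 s.1) (hst : OnPerp F s.1 t.1) (htr : OnPerp F t.1 r.1)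
    (hs : Bf F (poleVec F p.1.rep r.1.rep) s.1.rep = 0)
    (ht : Bf F (poleVec F p.1.rep r.1.rep) t.1.rep = 0) : s = r ∧ t = p := by
  have hQ := Qf_pole_ne_zero h2 hpr
  have hcp : Bf F (poleVec F p.1.rep r.1.rep) p.1.rep = 0 := Bf_poleVec_left _ _
  have hcr : Bf F (poleVec F p.1.rep r.1.rep) r.1.rep = 0 := Bf_poleVec_right _ _
  generalize poleVec F p.1.rep r.1.rep = c at *
  -- `x` and `c` are orthogonal and non-isotropic, hence independent.
  have key : ∀ x : Ipts F, Bf F c x.1.rep = 0 → poleVec F x.1.rep c ≠ 0 := by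
    intro x hx h
    have h' := Qf_poleVec x.1.rep c
    rw [h, Bf_comm, hx] at h'
    have h4 : (4 : F) ≠ 0 := by
      rw [show (4 : F) = 2 * 2 by norm_num]; exact mul_ne_zero h2 h2
    apply mul_ne_zero (mul_ne_zero h4 (Qf_ne_zero x)) hQ
    simp [Qf] at h' ⊢
    exact h'
  constructor
  · exact Subtype.ext <| eq_of_cross <| cross_eq_zero_of_Bf (key t ht)
      ((onPerp_comm _ _).1 hst) hs htr hcr
  · exact Subtype.ext <| eq_of_cross <| cross_eq_zero_of_Bf (key s hs)
      hst ht ((onPerp_comm _ _).1 hps) hcp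

theorem Amat_apply (p r : Ipts F) : Amat F p r = if OnPerp F p.1 r.1 then 1 else 0 := rfl

theorem Amat_comm (p r : Ipts F) : Amat F p r = Amat F r p := by
  simp only [Amat_apply, onPerp_comm p.1 r.1]

variable [Fintype F]

/-- In a finite field the product of two nonsquares is a square, so for orthogonal internal
`u, v` the class of `Qf` at the third vertex of the self-polar triangle on `u, v` is
that of `-1`. -/
theorem exists_common_iff (h2 : (2 : F) ≠ 0) {u v : Ipts F} (huv : OnPerp F u.1 v.1) :
    (∃ x : Ipts F, OnPerp F u.1 x.1 ∧ OnPerp F v.1 x.1) ↔ ¬ IsSquare (-1 : F) := by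
  have hne : u ≠ v := by
    rintro rfl
    exact not_onPerp_self h2 u huv
  have hw0 := poleVec_ne_zero h2 (cross_ne_zero fun h => hne (Subtype.ext h))
  have hQw := Qf_poleVec u.1.rep v.1.rep
  rw [(onPerp_iff _ _).1 huv] at hQw
  have hwu : Bf F u.1.rep (poleVec F u.1.rep v.1.rep) = 0 := by
    rw [Bf_comm]; exact Bf_poleVec_left _ _
  have hwv : Bf F v.1.rep (poleVec F u.1.rep v.1.rep) = 0 := by
    rw [Bf_comm]; exact Bf_poleVec_right _ _
  generalize poleVec F u.1.rep v.1.rep = w at *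
  have hprod : IsSquare (Qf F u.1.rep * Qf F v.1.rep) := by
    have hu := quadraticChar_neg_one_iff_not_isSquare.2 u.2
    have hv := quadraticChar_neg_one_iff_not_isSquare.2 v.2
    rw [← quadraticChar_one_iff_isSquare (mul_ne_zero (Qf_ne_zero u) (Qf_ne_zero v)), map_mul,
      hu, hv]
    norm_num
  obtain ⟨d, hd⟩ := hprod
  have hd0 : d ≠ 0 := by
    rintro rfl
    exact mul_ne_zero (Qf_ne_zero u) (Qf_ne_zero v) (by simpa using hd)
  have hw : Internal F (Projectivization.mk F w hw0) ↔ ¬ IsSquare (-1 : F) := by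
    rw [internal_mk, not_iff_not]
    constructor
    · rintro ⟨b, hb⟩
      refine ⟨b / (2 * d), ?_⟩
      field_simp
      linear_combination -hQw + hb + 4 * hd
    · rintro ⟨b, hb⟩
      refine ⟨2 * d * b, ?_⟩
      linear_combination hQw - 4 * hd + 4 * d ^ 2 * hb
  rw [← hw]
  constructor
  · rintro ⟨x, hxu, hxv⟩
    have hx : x.1 = Projectivization.mk F w hw0 := by
      conv_lhs => rw [← x.1.mk_rep]
      rw [Projectivization.mk_eq_mk_iff_crossProduct_eq_zero]
      exact cross_eq_zero_of_Bf
        (poleVec_ne_zero h2 (cross_ne_zero fun h => hne (Subtype.ext h))) hxu hxv hwu hwv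
    rw [← hx]
    exact x.2
  · intro h
    exact ⟨⟨_, h⟩, (onPerp_mk_right _ _).2 hwu, (onPerp_mk_right _ _).2 hwv⟩

/-! ### Counting modulo two -/

/-- The entry of `A²` at an orthogonal pair does not depend on the pair. -/
theorem sum_Amat_orth (h2 : (2 : F) ≠ 0) {u v : Ipts F} (huv : OnPerp F u.1 v.1) :
    ∑ x, Amat F u x * Amat F v x = if IsSquare (-1 : F) then 0 else 1 := by
  have hne : u ≠ v := by
    rintro rfl
    exact not_onPerp_self h2 u huv
  have hiff := exists_common_iff h2 huv
  split_ifs with h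
  · apply Finset.sum_eq_zero
    intro x _
    have hx : ¬ (OnPerp F u.1 x.1 ∧ OnPerp F v.1 x.1) := fun hx => hiff.1 ⟨x, hx⟩ h
    simp only [Amat_apply]
    grind
  · obtain ⟨x, hxu, hxv⟩ := hiff.2 h
    rw [Finset.sum_eq_single x]
    · simp [Amat_apply, hxu, hxv]
    · intro y _ hy
      have hy' : ¬ (OnPerp F u.1 y.1 ∧ OnPerp F v.1 y.1) := fun h' =>
        hy (eq_of_onPerp h2 hne h'.1 h'.2 hxu hxv)
      simp only [Amat_apply]
      grind
    · simp

/-- The number of paths `p, s, t, p` is even, by reversal. -/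
theorem sum_closed (h2 : (2 : F) ≠ 0) (p : Ipts F) :
    ∑ x : Ipts F × Ipts F, Amat F p x.1 * Amat F x.1 x.2 * Amat F x.2 p = 0 := by
  apply Finset.sum_involution (fun x _ => x.swap)
  · rintro ⟨s, t⟩ _
    simp only [Prod.swap]
    rw [Amat_comm p s, Amat_comm p t, Amat_comm t s,
      show Amat F t p * Amat F s t * Amat F s p = Amat F s p * Amat F s t * Amat F t p by ring]
    exact CharTwo.add_self_eq_zero _
  · rintro ⟨s, t⟩ _ h h'
    simp only [Prod.swap, Prod.mk.injEq] at h'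
    rw [h'.1] at h
    simp [Amat_apply, not_onPerp_self h2] at h
  · simp
  · simp

/-- Among the paths `p, s, t, r` with neither `s` nor `t` the pole of `pr`, the reflection leaves
at most the path `p, r, p, r` unpaired. -/
theorem sum_generic (h2 : (2 : F) ≠ 0) {p r : Ipts F} (hpr : p ≠ r) :
    ∑ x : Ipts F × Ipts F,
      (if (OnPerp F p.1 x.1.1 ∧ OnPerp F r.1 x.1.1) ∨ (OnPerp F p.1 x.2.1 ∧ OnPerp F r.1 x.2.1)
        then 0 else Amat F p x.1 * Amat F x.1 x.2 * Amat F x.2 r) = Amat F p r := by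
  obtain ⟨σ, hσσ, hσ, hp, hr, hfix⟩ := exists_reflection h2 hpr
  have hpx : ∀ x, OnPerp F p.1 (σ x).1 ↔ OnPerp F p.1 x.1 := fun x => by
    have := hσ p x; rwa [hp] at this
  have hrx : ∀ x, OnPerp F r.1 (σ x).1 ↔ OnPerp F r.1 x.1 := fun x => by
    have := hσ r x; rwa [hr] at this
  have hσp : ∀ x, σ x = p ↔ x = p := fun x =>
    ⟨fun h => by rw [← hσσ x, h, hp], fun h => by rw [h, hp]⟩
  have hσr : ∀ x, σ x = r ↔ x = r := fun x =>
    ⟨fun h => by rw [← hσσ x, h, hr], fun h => by rw [h, hr]⟩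
  have hsum : ∑ x : Ipts F × Ipts F, (if x = (r, p) then Amat F p r else 0) = Amat F p r := by
    simp
  refine Eq.trans ?_ hsum
  rw [← sub_eq_zero, ← Finset.sum_sub_distrib]
  apply Finset.sum_involution (fun x _ => (σ x.1, σ x.2))
  · rintro ⟨s, t⟩ _
    have e : Amat F (σ t) r = Amat F t r := by
      rw [Amat_comm, Amat_comm t]; simp only [Amat_apply, hrx]
    simp only [e, Amat_apply p, Amat_apply (σ s), hpx, hrx, hσ, Prod.mk.injEq, hσp, hσr,
      Amat_apply s]
    exact CharTwo.add_self_eq_zero _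
  · rintro ⟨s, t⟩ _ hne hst
    apply hne
    simp only [Prod.mk.injEq] at hst ⊢
    have hpp := not_onPerp_self h2 p
    have hrr := not_onPerp_self h2 r
    have hcm := onPerp_comm p.1 r.1
    by_cases hx : s = r ∧ t = p
    · obtain ⟨rfl, rfl⟩ := hx
      simp only [Amat_apply]
      grind
    · rw [if_neg hx, sub_zero]
      split_ifs with hc
      · rfl
      · push Not at hc
        have hs := (hfix s hst.1).resolve_left (by tauto)
        have ht := (hfix t hst.2).resolve_left (by tauto)
        have : ¬ (OnPerp F p.1 s.1 ∧ OnPerp F s.1 t.1 ∧ OnPerp F t.1 r.1) := fun h =>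
          hx (eq_of_collinear_path h2 hpr h.1 h.2.1 h.2.2 hs ht)
        simp only [Amat_apply]
        grind
  · simp
  · rintro ⟨s, t⟩ _
    simp [hσσ]

/-- The paths `p, s, t, r` through the pole `c` of `pr` are even in number: those with `s = c` are
counted by `A²` at `(c, r)`, those with `t = c` by `A²` at `(c, p)`. -/
theorem sum_special (h2 : (2 : F) ≠ 0) {p r : Ipts F} (hpr : p ≠ r) :
    ∑ x : Ipts F × Ipts F,
      (if (OnPerp F p.1 x.1.1 ∧ OnPerp F r.1 x.1.1) ∨ (OnPerp F p.1 x.2.1 ∧ OnPerp F r.1 x.2.1)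
        then Amat F p x.1 * Amat F x.1 x.2 * Amat F x.2 r else 0) = 0 := by
  by_cases hex : ∃ c : Ipts F, OnPerp F p.1 c.1 ∧ OnPerp F r.1 c.1
  · obtain ⟨c, hpc, hrc⟩ := hex
    have hc : ∀ x : Ipts F, (OnPerp F p.1 x.1 ∧ OnPerp F r.1 x.1) ↔ x = c := fun x =>
      ⟨fun h => eq_of_onPerp h2 hpr h.1 h.2 hpc hrc, by rintro rfl; exact ⟨hpc, hrc⟩⟩
    have hcc : Amat F c c = 0 := by simp [Amat_apply, not_onPerp_self h2]
    have hApc : Amat F p c = 1 := by simp [Amat_apply, hpc]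
    have hAcr : Amat F c r = 1 := by rw [Amat_comm]; simp [Amat_apply, hrc]
    simp only [hc]
    have hsplit : ∀ x : Ipts F × Ipts F,
        (if x.1 = c ∨ x.2 = c then Amat F p x.1 * Amat F x.1 x.2 * Amat F x.2 r else 0) =
        (if x.1 = c then Amat F c x.2 * Amat F r x.2 else 0) +
        (if x.2 = c then Amat F c x.1 * Amat F p x.1 else 0) := by
      rintro ⟨s, t⟩
      by_cases hs : s = c <;> by_cases ht : t = c
      · simp [hs, ht, hcc]
      · simp [hs, ht, hApc, Amat_comm t r]
      · simp [hs, ht, hAcr, Amat_comm s c, mul_comm]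
      · simp [hs, ht]
    rw [Finset.sum_congr rfl fun x _ => hsplit x, Finset.sum_add_distrib,
      Fintype.sum_prod_type, Fintype.sum_prod_type_right]
    simp only [Finset.sum_ite_irrel, Finset.sum_const_zero, Finset.sum_ite_eq', Finset.mem_univ,
      if_true]
    rw [sum_Amat_orth h2 ((onPerp_comm _ _).1 hrc), sum_Amat_orth h2 ((onPerp_comm _ _).1 hpc)]
    exact CharTwo.add_self_eq_zero _
  · push Not at hex
    apply Finset.sum_eq_zero
    intro x _
    rw [if_neg]
    have h1 := hex x.1
    have h2 := hex x.2
    tauto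

end Helpers

/-- `A^3 = A` over `F_2`. -/
theorem Amat_pow_three (hq : Odd (Fintype.card K)) : Amat K ^ 3 = Amat K := by
  have h2 : (2 : K) ≠ 0 := by
    apply Ring.two_ne_zero
    intro h
    have := FiniteField.even_card_iff_char_two.1 h
    rw [Nat.odd_iff] at hq
    omega
  ext p r
  have hexp : (Amat K ^ 3) p r =
      ∑ x : Ipts K × Ipts K, Amat K p x.1 * Amat K x.1 x.2 * Amat K x.2 r := by
    rw [pow_succ, pow_two, Matrix.mul_apply, Fintype.sum_prod_type_right]
    simp only [Matrix.mul_apply, Finset.sum_mul]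
  rw [hexp]
  by_cases hpr : p = r
  · subst hpr
    rw [sum_closed h2 p, Amat_apply, if_neg (not_onPerp_self h2 p)]
  · refine Eq.trans ?_
      ((congrArg₂ (· + ·) (sum_generic h2 hpr) (sum_special h2 hpr)).trans (add_zero _))
    rw [← Finset.sum_add_distrib]
    apply Finset.sum_congr rfl
    intro x _
    split_ifs <;> simp

end ConicPaper
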